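/- Let P ⊂ ℝ² be a bounded indecomposable set of finite perimeter. Then the essential diameter of P is at most the perimeter of P, i.e., diam(P) ≤ H¹(∂*P). -/

import Mathlib

open Metric Set MeasureTheory Filter

noncomputable section

abbrev E2 := EuclideanSpace ℝ (Fin 2)

/-- The density ratio of `P` in the ball `B(x,r)`. -/
noncomputable def ballDensity (P : Set E2) (x : E2) (r : ℝ) : ℝ :=
  (volume (P ∩ ball x r)).toReal / (volume (ball x r)).toReal

/-- The essential (measure-theoretic) boundary `∂*P`: points where the density of `P`
tends neither to `0` nor to `1`. -/
def essentialBoundary (P : Set E2) : Set E2 :=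
  {x | ¬ Tendsto (ballDensity P x) (nhdsWithin 0 (Ioi 0)) (nhds 0) ∧
       ¬ Tendsto (ballDensity P x) (nhdsWithin 0 (Ioi 0)) (nhds 1)}

/-- `P` is indecomposable: it cannot be split into two disjoint pieces of positive measure
whose perimeters add up to the perimeter of `P`. -/
def Indecomposable (P : Set E2) : Prop :=
  ¬ ∃ P1 P2 : Set E2, MeasurableSet P1 ∧ MeasurableSet P2 ∧ P = P1 ∪ P2 ∧ P1 ∩ P2 = ∅ ∧
      0 < volume P1 ∧ 0 < volume P2 ∧
      μH[1] (essentialBoundary P) =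
        μH[1] (essentialBoundary P1) + μH[1] (essentialBoundary P2)

/-- The essential diameter `ess sup {|x - y| : x, y ∈ P}`. -/
noncomputable def essDiam (P : Set E2) : ℝ :=
  sInf {d : ℝ | 0 ≤ d ∧ ∃ N : Set E2, volume N = 0 ∧
    ∀ x ∈ P \ N, ∀ y ∈ P \ N, dist x y ≤ d}


def GG (Q : Set (ℝ × ℝ)) (k : ℕ) : Set (ℝ × ℝ) :=
  {z | ∀ r : ℝ, 0 < r → r < 1 / ((k : ℝ) + 1) →
    volume (closedBall z r \ Q) ≤ ENNReal.ofReal (r ^ 2 / 8)}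

lemma vol_box (z : ℝ × ℝ) (r : ℝ) (hr : 0 < r) :
    volume (closedBall z r) = ENNReal.ofReal (4 * r ^ 2) := by
  obtain ⟨a, b⟩ := z
  rw [← closedBall_prod_same, Measure.volume_eq_prod, Measure.prod_prod, Real.volume_closedBall,
    Real.volume_closedBall, ← ENNReal.ofReal_mul (by positivity)]
  congr 1; ring

lemma GG_closed (Q : Set (ℝ × ℝ)) (k : ℕ) : IsClosed (GG Q k) := by
  rw [← isOpen_compl_iff, Metric.isOpen_iff]
  intro z hz
  simp only [GG, mem_compl_iff, mem_ofPred_eq, not_forall, not_le] at hz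
  obtain ⟨r, hr0, hr1, hv⟩ := hz
  -- find d
  have hc : Tendsto (fun d : ℝ => ENNReal.ofReal ((r + d) ^ 2 / 8)) (nhds 0)
      (nhds (ENNReal.ofReal ((r + 0) ^ 2 / 8))) := by
    exact (ENNReal.continuous_ofReal.comp (by fun_prop)).tendsto _
  rw [add_zero] at hc
  have h1 := hc.eventually (gt_mem_nhds hv)
  have h2 : ∀ᶠ d : ℝ in nhds 0, d < 1 / ((k : ℝ) + 1) - r := gt_mem_nhds (by linarith)
  obtain ⟨ε, hε, h⟩ := Metric.eventually_nhds_iff.1 (h1.and h2)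
  refine ⟨ε, hε, fun z' hz' => ?_⟩
  have hd := h (y := dist z' z) (by simpa [abs_of_nonneg] using hz')
  intro hG
  have := hG (r + dist z' z) (by positivity) (by linarith [hd.2])
  refine absurd (lt_of_lt_of_le hd.1 (le_trans (measure_mono ?_) this)) (lt_irrefl _)
  apply sdiff_subset_sdiff_left
  apply closedBall_subset_closedBall'
  rw [dist_comm]

lemma GG_disj (Q : Set (ℝ × ℝ)) (k l : ℕ) (z : ℝ × ℝ) (h1 : z ∈ GG Q k) (h2 : z ∈ GG Qᶜ l) :
    False := by
  obtain ⟨r, hr0, hr⟩ : ∃ r : ℝ, 0 < r ∧ r < min (1 / ((k : ℝ) + 1)) (1 / ((l : ℝ) + 1)) :=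
    exists_between (by positivity)
  have a1 := h1 r hr0 (lt_of_lt_of_le hr (min_le_left _ _))
  have a2 := h2 r hr0 (lt_of_lt_of_le hr (min_le_right _ _))
  have a3 : volume (closedBall z r) ≤ volume (closedBall z r \ Q) + volume (closedBall z r \ Qᶜ) := by
    refine le_trans (measure_mono ?_) (measure_union_le _ _)
    intro x hx
    by_cases h : x ∈ Q <;> simp_all
  have := a3.trans (add_le_add a1 a2)
  rw [vol_box z r hr0, ← ENNReal.ofReal_add (by positivity) (by positivity),
    ENNReal.ofReal_le_ofReal_iff (by positivity)] at this
  nlinarith [sq_pos_of_pos hr0]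

/-- a.e. point of `Q` is not a density-zero point. -/
lemma ae_not_GG (Q : Set (ℝ × ℝ)) (hQ : MeasurableSet Q) :
    ∀ᵐ z : ℝ × ℝ, z ∈ Q → ∀ k, z ∉ GG Qᶜ k := by
  have h := IsUnifLocDoublingMeasure.ae_tendsto_measure_inter_div (volume : Measure (ℝ × ℝ)) Q 1
  rw [ae_restrict_iff' hQ] at h
  filter_upwards [h] with z hz hzQ k hk
  have h1 := hz hzQ (l := nhdsWithin (0 : ℝ) (Ioi 0)) (fun _ => z) id tendsto_id (by
    filter_upwards [self_mem_nhdsWithin] with r hr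
    simpa using le_of_lt hr)
  have h2 := h1.eventually (lt_mem_nhds (show (1 / 2 : ENNReal) < 1 by norm_num))
  have h3 : ∀ᶠ r : ℝ in nhdsWithin 0 (Ioi 0), r < 1 / ((k : ℝ) + 1) :=
    nhdsWithin_le_nhds (gt_mem_nhds (by positivity))
  obtain ⟨r, ⟨h2, h3⟩, h4⟩ := ((h2.and h3).and self_mem_nhdsWithin).exists
  have hr : (0 : ℝ) < r := h4
  have h5 := hk r hr h3
  simp only [id, vol_box z r hr] at h2
  have h6 : closedBall z r \ Qᶜ = Q ∩ closedBall z r := by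
    rw [sdiff_compl, inter_comm]
  rw [h6] at h5
  have h7 := h2.trans_le (ENNReal.div_le_div_right h5 _)
  rw [← ENNReal.ofReal_div_of_pos (by positivity)] at h7
  have h8 : r ^ 2 / 8 / (4 * r ^ 2) = 1 / 32 := by field_simp; norm_num
  rw [h8, show (1 / 2 : ENNReal) = ENNReal.ofReal (1 / 2) by
    rw [ENNReal.ofReal_div_of_pos (by norm_num)]; simp,
    ENNReal.ofReal_lt_ofReal_iff (by norm_num)] at h7
  norm_num at h7

lemma key_right (Q : Set (ℝ × ℝ)) (hQ : MeasurableSet Q) (k m : ℕ) (c : ℝ) :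
    volume {t : ℝ | ∃ a : ℝ, (t, a) ∈ GG Q k ∧ a + 1 / ((m : ℝ) + 1) ≤ c ∧
      ∀ᵐ s : ℝ, s ∈ Ioo a c → (t, s) ∉ Q} = 0 := by
  set T := {t : ℝ | ∃ a : ℝ, (t, a) ∈ GG Q k ∧ a + 1 / ((m : ℝ) + 1) ≤ c ∧
      ∀ᵐ s : ℝ, s ∈ Ioo a c → (t, s) ∉ Q} with hT
  by_contra hne
  have hd := Besicovitch.ae_tendsto_measure_inter_div (volume : Measure ℝ) T
  have : (ae (volume.restrict T)).NeBot := by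
    rw [ae_neBot]
    intro h0
    exact hne (by simpa using congrArg (fun μ => μ univ) h0)
  obtain ⟨t0, ht0⟩ := hd.exists
  have h2 := ht0.eventually (lt_mem_nhds (show (1 / 2 : ENNReal) < 1 by norm_num))
  have h3 : ∀ᶠ r : ℝ in nhdsWithin 0 (Ioi 0),
      r < min (1 / ((k : ℝ) + 1)) (1 / ((m : ℝ) + 1)) / 2 :=
    nhdsWithin_le_nhds (gt_mem_nhds (by positivity))
  obtain ⟨r, ⟨h2, h3⟩, h4⟩ := ((h2.and h3).and self_mem_nhdsWithin).exists
  have hr : (0 : ℝ) < r := h4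
  have hrk : 2 * r < 1 / ((k : ℝ) + 1) := by
    have := min_le_left (1 / ((k : ℝ) + 1)) (1 / ((m : ℝ) + 1)); linarith
  have hrm : 2 * r < 1 / ((m : ℝ) + 1) := by
    have := min_le_right (1 / ((k : ℝ) + 1)) (1 / ((m : ℝ) + 1)); linarith
  rw [Real.volume_closedBall] at h2
  have hS : ENNReal.ofReal r < volume (T ∩ closedBall t0 r) := by
    have := (ENNReal.lt_div_iff_mul_lt (Or.inl (by simpa using hr))
      (Or.inl ENNReal.ofReal_ne_top)).1 h2
    refine lt_of_eq_of_lt ?_ this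
    rw [show (1 / 2 : ENNReal) = ENNReal.ofReal (1 / 2) by
      rw [ENNReal.ofReal_div_of_pos (by norm_num)]; simp, ← ENNReal.ofReal_mul (by norm_num)]
    congr 1; ring
  set S := T ∩ closedBall t0 r with hSdef
  have hSne : S.Nonempty := nonempty_of_measure_ne_zero (by
    intro h; rw [h] at hS; simp at hS)
  have hch : ∀ t ∈ S, ∃ a : ℝ, (t, a) ∈ GG Q k ∧ a + 1 / ((m : ℝ) + 1) ≤ c ∧
      ∀ᵐ s : ℝ, s ∈ Ioo a c → (t, s) ∉ Q := fun t ht => ht.1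
  choose! a ha using hch
  have hbdd : BddAbove (a '' S) := by
    refine ⟨c, ?_⟩
    rintro _ ⟨t, ht, rfl⟩
    have := (ha t ht).2.1
    have h0 : 0 < 1 / ((m : ℝ) + 1) := by positivity
    linarith
  obtain ⟨_, ⟨t1, ht1, rfl⟩, hlt⟩ := exists_lt_of_lt_csSup (hSne.image a)
    (show sSup (a '' S) - r < sSup (a '' S) by linarith)
  set W := (closedBall t0 r ×ˢ Ioo (a t1 + r) (a t1 + 2 * r)) \ Q with hW
  have hWm : MeasurableSet W :=
    (measurableSet_closedBall.prod measurableSet_Ioo).diff hQ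
  have hWsub : W ⊆ closedBall (t1, a t1) (2 * r) \ Q := by
    apply sdiff_subset_sdiff_left
    rintro ⟨t, s⟩ ⟨h1, h2⟩
    have h5 := ht1.2
    simp only [mem_closedBall, Prod.dist_eq, Real.dist_eq, mem_Ioo, max_le_iff, abs_le] at *
    refine ⟨⟨?_, ?_⟩, ⟨?_, ?_⟩⟩ <;> linarith
  have hup := (measure_mono hWsub).trans ((ha t1 ht1).1 (2 * r) (by linarith) hrk)
  have hslice : S ⊆ {t | ENNReal.ofReal r ≤ volume (Prod.mk t ⁻¹' W)} := by
    intro t ht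
    have hle : a t ≤ sSup (a '' S) := le_csSup hbdd ⟨t, ht, rfl⟩
    have e1 : ENNReal.ofReal r = volume (Ioo (a t1 + r) (a t1 + 2 * r)) := by
      rw [Real.volume_Ioo]; congr 1; ring
    show ENNReal.ofReal r ≤ _
    rw [e1]
    apply measure_mono_ae
    filter_upwards [(ha t ht).2.2] with s hs hs2
    have hc := (ha t1 ht1).2.1
    have hs2' : a t1 + r < s ∧ s < a t1 + 2 * r := hs2
    exact ⟨⟨ht.2, hs2⟩, hs ⟨by linarith, by linarith⟩⟩
  have hlow : ENNReal.ofReal r * ENNReal.ofReal r ≤ volume W := by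
    rw [Measure.volume_eq_prod, Measure.prod_apply hWm]
    refine le_trans ?_ (mul_meas_ge_le_lintegral (measurable_measure_prodMk_left hWm) (ENNReal.ofReal r))
    gcongr
    exact hS.le.trans (measure_mono hslice)
  have := hlow.trans hup
  rw [← ENNReal.ofReal_mul hr.le, ENNReal.ofReal_le_ofReal_iff (by positivity)] at this
  nlinarith

lemma baire_aux (A : Set ℝ) (U C : Set ℝ) (hU : IsOpen U)
    (hne : (frontier A ∩ U).Nonempty) (hFU : frontier A ∩ U ⊆ C) (hCA : C ⊆ A) :
    ∃ a ∈ C, (∃ y, a < y ∧ Ioo a y ⊆ Aᶜ) ∨ (∃ y, y < a ∧ Ioo y a ⊆ Aᶜ) := by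
  obtain ⟨x, hxF, hxU⟩ := hne
  obtain ⟨ε, hε, hball⟩ := Metric.isOpen_iff.1 hU x hxU
  have hxc : x ∈ closure Aᶜ := by
    have : x ∈ frontier Aᶜ := by rwa [frontier_compl]
    exact this.1
  obtain ⟨y, hyA, hy⟩ := Metric.mem_closure_iff.1 hxc ε hε
  have hxA : x ∈ A := hCA (hFU ⟨hxF, hxU⟩)
  have hxy : x ≠ y := by rintro rfl; exact hyA hxA
  rw [Real.dist_eq, abs_lt] at hy
  have conn : ∀ s : Set ℝ, IsPreconnected s → y ∈ s → (s ∩ frontier A = ∅) → s ⊆ Aᶜ := by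
    intro s hs hys hd z hz hzA
    have hnf : ∀ w ∈ s, w ∈ interior A ∨ w ∈ (closure A)ᶜ := by
      intro w hw
      by_contra hcon
      push Not at hcon
      have hwF : w ∈ s ∩ frontier A := ⟨hw, not_not.1 hcon.2, hcon.1⟩
      rw [hd] at hwF
      exact hwF
    have := hs (interior A) (closure A)ᶜ isOpen_interior isClosed_closure.isOpen_compl hnf
      ⟨z, hz, (hnf z hz).resolve_right (fun h => h (subset_closure hzA))⟩
      ⟨y, hys, (hnf y hys).resolve_left (fun h => hyA (interior_subset h))⟩
    obtain ⟨w, _, hw1, hw2⟩ := this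
    exact hw2 (subset_closure (interior_subset hw1))
  rcases lt_or_gt_of_ne hxy with h | h
  · have hK : IsCompact (Icc x y ∩ frontier A) := isCompact_Icc.inter_right isClosed_frontier
    obtain ⟨a, ⟨haI, haF⟩, hmax⟩ := hK.exists_isGreatest ⟨x, ⟨le_refl _, h.le⟩, hxF⟩
    have haC : a ∈ C := hFU ⟨haF, hball (by
      rw [mem_ball, Real.dist_eq, abs_lt]; constructor <;> linarith [haI.1, haI.2])⟩
    have hay : a < y := lt_of_le_of_ne haI.2 (by rintro rfl; exact hyA (hCA haC))
    refine ⟨a, haC, Or.inl ⟨y, hay, Ioo_subset_Ioc_self.trans (conn _ isPreconnected_Ioc ⟨hay, le_refl _⟩ ?_)⟩⟩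
    rw [eq_empty_iff_forall_notMem]
    rintro z ⟨hz, hzF⟩
    exact absurd (hmax ⟨⟨haI.1.trans hz.1.le, hz.2⟩, hzF⟩) (not_le.2 hz.1)
  · have hK : IsCompact (Icc y x ∩ frontier A) := isCompact_Icc.inter_right isClosed_frontier
    obtain ⟨a, ⟨haI, haF⟩, hmax⟩ := hK.exists_isLeast ⟨x, ⟨h.le, le_refl _⟩, hxF⟩
    have haC : a ∈ C := hFU ⟨haF, hball (by
      rw [mem_ball, Real.dist_eq, abs_lt]; constructor <;> linarith [haI.1, haI.2])⟩
    have hay : y < a := lt_of_le_of_ne haI.1 (by rintro rfl; exact hyA (hCA haC))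
    refine ⟨a, haC, Or.inr ⟨y, hay, Ioo_subset_Ico_self.trans (conn _ isPreconnected_Ico ⟨le_refl _, hay⟩ ?_)⟩⟩
    rw [eq_empty_iff_forall_notMem]
    rintro z ⟨hz, hzF⟩
    exact absurd (hmax ⟨⟨hz.1, hz.2.le.trans haI.2⟩, hzF⟩) (not_le.2 hz.2)

lemma baire_line (A B : ℕ → Set ℝ) (hA : ∀ k, IsClosed (A k)) (hB : ∀ k, IsClosed (B k))
    (hcov : ∀ s, (∃ k, s ∈ A k) ∨ (∃ k, s ∈ B k))
    (hdisj : ∀ s k l, s ∈ A k → s ∈ B l → False)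
    (hAne : ∃ s k, s ∈ A k) (hBne : ∃ s k, s ∈ B k) :
    (∃ k, ∃ a ∈ A k, (∃ y, a < y ∧ ∀ s ∈ Ioo a y, ∃ l, s ∈ B l) ∨
        (∃ y, y < a ∧ ∀ s ∈ Ioo y a, ∃ l, s ∈ B l)) ∨
    (∃ k, ∃ a ∈ B k, (∃ y, a < y ∧ ∀ s ∈ Ioo a y, ∃ l, s ∈ A l) ∨
        (∃ y, y < a ∧ ∀ s ∈ Ioo y a, ∃ l, s ∈ A l)) := by
  set AA := ⋃ k, A k with hAA
  have hcompl : AAᶜ = ⋃ k, B k := by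
    ext s
    simp only [hAA, mem_compl_iff, mem_iUnion]
    constructor
    · intro h; exact (hcov s).resolve_left h
    · rintro ⟨l, hl⟩ ⟨k, hk⟩; exact hdisj s k l hk hl
  have hFne : (frontier AA).Nonempty := by
    rw [nonempty_frontier_iff]
    refine ⟨?_, ?_⟩
    · obtain ⟨s, k, h⟩ := hAne; exact ⟨s, mem_iUnion.2 ⟨k, h⟩⟩
    · intro h
      obtain ⟨s, k, hs⟩ := hBne
      have : s ∈ AAᶜ := by rw [hcompl]; exact mem_iUnion.2 ⟨k, hs⟩
      rw [h] at this; simp at this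
  set F := frontier AA with hF
  have : Nonempty F := hFne.to_subtype
  have : CompleteSpace F := isClosed_frontier.completeSpace_coe
  let f : ℕ ⊕ ℕ → Set F := fun i => Subtype.val ⁻¹' (Sum.elim A B i)
  obtain ⟨i, hi⟩ := nonempty_interior_of_iUnion_of_closed (f := f) (by
      rintro (k | k)
      · exact (hA k).preimage continuous_subtype_val
      · exact (hB k).preimage continuous_subtype_val) (by
      ext ⟨s, hs⟩
      simp only [mem_iUnion, mem_univ, iff_true, f]
      rcases hcov s with ⟨k, hk⟩ | ⟨k, hk⟩
      · exact ⟨Sum.inl k, hk⟩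
      · exact ⟨Sum.inr k, hk⟩)
  obtain ⟨U, hU, hUe⟩ := isOpen_induced_iff.1 (isOpen_interior (s := f i))
  have hne : (F ∩ U).Nonempty := by
    obtain ⟨x, hx⟩ := hi
    rw [← hUe] at hx
    exact ⟨x, x.2, hx⟩
  have hsub : F ∩ U ⊆ Sum.elim A B i := by
    rintro x ⟨hxF, hxU⟩
    have : (⟨x, hxF⟩ : F) ∈ interior (f i) := by rw [← hUe]; exact hxU
    have h2 := interior_subset this
    exact h2
  have hB' : ∀ s, s ∈ AAᶜ → ∃ l, s ∈ B l := by
    intro s hs; rw [hcompl] at hs; exact mem_iUnion.1 hs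
  rcases i with k | k
  · left
    obtain ⟨a, haC, h⟩ := baire_aux AA U (A k) hU hne hsub (subset_iUnion A k)
    refine ⟨k, a, haC, ?_⟩
    rcases h with ⟨y, h1, h2⟩ | ⟨y, h1, h2⟩
    · exact Or.inl ⟨y, h1, fun s hs => hB' s (h2 hs)⟩
    · exact Or.inr ⟨y, h1, fun s hs => hB' s (h2 hs)⟩
  · right
    obtain ⟨a, haC, h⟩ := baire_aux AAᶜ U (B k) hU (by rwa [frontier_compl])
      (by rwa [frontier_compl]) (by rw [hcompl]; exact subset_iUnion B k)
    rw [compl_compl] at h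
    refine ⟨k, a, haC, ?_⟩
    rcases h with ⟨y, h1, h2⟩ | ⟨y, h1, h2⟩
    · exact Or.inl ⟨y, h1, fun s hs => mem_iUnion.1 (h2 hs)⟩
    · exact Or.inr ⟨y, h1, fun s hs => mem_iUnion.1 (h2 hs)⟩

lemma key_left (Q : Set (ℝ × ℝ)) (hQ : MeasurableSet Q) (k m : ℕ) (c : ℝ) :
    volume {t : ℝ | ∃ a : ℝ, (t, a) ∈ GG Q k ∧ c + 1 / ((m : ℝ) + 1) ≤ a ∧
      ∀ᵐ s : ℝ, s ∈ Ioo c a → (t, s) ∉ Q} = 0 := by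
  let ρ : ℝ × ℝ → ℝ × ℝ := Prod.map id (fun s => -s)
  have hρ : MeasurePreserving ρ volume volume :=
    (MeasurePreserving.id (volume : Measure ℝ)).prod (Measure.measurePreserving_neg volume)
  have hQ' : MeasurableSet (ρ ⁻¹' Q) := hρ.measurable hQ
  refine measure_mono_null ?_ (key_right (ρ ⁻¹' Q) hQ' k m (-c))
  rintro t ⟨a, ha, hca, hae⟩
  refine ⟨-a, ?_, by linarith, ?_⟩
  · intro r hr hrk
    have e : closedBall (t, -a) r \ ρ ⁻¹' Q = ρ ⁻¹' (closedBall (t, a) r \ Q) := by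
      ext ⟨u, v⟩
      have : |v + a| = |-v - a| := by rw [← abs_neg]; congr 1; ring
      simp [ρ, Prod.dist_eq, Real.dist_eq, this]
    rw [e, hρ.measure_preimage (measurableSet_closedBall.diff hQ).nullMeasurableSet]
    exact ha r hr hrk
  · have := (Measure.measurePreserving_neg (volume : Measure ℝ)).quasiMeasurePreserving.ae hae
    filter_upwards [this] with s hs hs2
    exact hs ⟨by linarith [hs2.2], by linarith [hs2.1]⟩

lemma line_half (Q : Set (ℝ × ℝ)) (hQ : MeasurableSet Q) :
    ∀ᵐ t : ℝ, ∀ k a, (t, a) ∈ GG Q k →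
      ((∃ y, a < y ∧ ∀ s ∈ Ioo a y, ∃ l, (t, s) ∈ GG Qᶜ l) ∨
        (∃ y, y < a ∧ ∀ s ∈ Ioo y a, ∃ l, (t, s) ∈ GG Qᶜ l)) → False := by
  have h1 : ∀ᵐ t : ℝ, ∀ᵐ s : ℝ, (t, s) ∈ Q → ∀ k, (t, s) ∉ GG Qᶜ k :=
    Measure.ae_ae_of_ae_prod (ae_not_GG Q hQ)
  have h2 : ∀ᵐ t : ℝ, ∀ (k m : ℕ) (c : ℚ), ¬ ∃ a : ℝ, (t, a) ∈ GG Q k ∧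
      a + 1 / ((m : ℝ) + 1) ≤ c ∧ ∀ᵐ s : ℝ, s ∈ Ioo a (c : ℝ) → (t, s) ∉ Q := by
    simp only [ae_all_iff]
    intro k m c
    rw [ae_iff]
    simpa only [not_not] using key_right Q hQ k m c
  have h3 : ∀ᵐ t : ℝ, ∀ (k m : ℕ) (c : ℚ), ¬ ∃ a : ℝ, (t, a) ∈ GG Q k ∧
      c + 1 / ((m : ℝ) + 1) ≤ a ∧ ∀ᵐ s : ℝ, s ∈ Ioo (c : ℝ) a → (t, s) ∉ Q := by
    simp only [ae_all_iff]
    intro k m c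
    rw [ae_iff]
    simpa only [not_not] using key_left Q hQ k m c
  filter_upwards [h1, h2, h3] with t h1 h2 h3 k a ha h
  rcases h with ⟨y, hy, h⟩ | ⟨y, hy, h⟩
  · obtain ⟨c, hc1, hc2⟩ := exists_rat_btwn hy
    obtain ⟨m, hm⟩ := exists_nat_one_div_lt (sub_pos.2 hc1)
    refine h2 k m c ⟨a, ha, by linarith, ?_⟩
    filter_upwards [h1] with s hs hs2 hsQ
    obtain ⟨l, hl⟩ := h s ⟨hs2.1, hs2.2.trans hc2⟩
    exact hs hsQ l hl
  · obtain ⟨c, hc1, hc2⟩ := exists_rat_btwn hy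
    obtain ⟨m, hm⟩ := exists_nat_one_div_lt (sub_pos.2 hc2)
    refine h3 k m c ⟨a, ha, by linarith, ?_⟩
    filter_upwards [h1] with s hs hs2 hsQ
    obtain ⟨l, hl⟩ := h s ⟨hc1.trans hs2.1, hs2.2⟩
    exact hs hsQ l hl

lemma line_lemma (Q : Set (ℝ × ℝ)) (hQ : MeasurableSet Q) :
    ∀ᵐ t : ℝ, (∀ s, (∃ k, (t, s) ∈ GG Q k) ∨ ∃ k, (t, s) ∈ GG Qᶜ k) →
      (∃ s k, (t, s) ∈ GG Qᶜ k) → ∀ s k, (t, s) ∉ GG Q k := by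
  filter_upwards [line_half Q hQ, line_half Qᶜ hQ.compl] with t h1 h2 hcov hB s k hs
  rw [compl_compl] at h2
  have hcl : ∀ (R : Set (ℝ × ℝ)) (k : ℕ), IsClosed {s : ℝ | (t, s) ∈ GG R k} := fun R k =>
    (GG_closed R k).preimage (by fun_prop : Continuous fun s : ℝ => (t, s))
  rcases baire_line (fun k => {s : ℝ | (t, s) ∈ GG Q k}) (fun k => {s : ℝ | (t, s) ∈ GG Qᶜ k})
    (hcl Q) (hcl Qᶜ) hcov (fun s k l h h' => GG_disj Q k l _ h h') ⟨s, k, hs⟩ hB with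
    ⟨k, a, ha, h⟩ | ⟨k, a, ha, h⟩
  · exact h1 k a ha h
  · exact h2 k a ha h

lemma exists_coord (e : E2) (he : ‖e‖ = 1) : ∃ Φ : E2 ≃ᵐ ℝ × ℝ,
    MeasurePreserving Φ volume volume ∧ (∀ x, (Φ x).1 = inner ℝ e x) ∧
    ∀ x y, dist x y ^ 2 = ((Φ x).1 - (Φ y).1) ^ 2 + ((Φ x).2 - (Φ y).2) ^ 2 := by
  obtain ⟨b, hb⟩ := Orthonormal.exists_orthonormalBasis_extension_of_card_eq (𝕜 := ℝ) (E := E2)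
    (ι := Fin 2) (by simp) (v := fun _ => e) (s := {0}) (by
      constructor
      · intro i; simpa using he
      · intro i j hij
        exact absurd (Subsingleton.elim i j) hij)
  let Φ : E2 ≃ᵐ ℝ × ℝ := (b.repr.toHomeomorph.toMeasurableEquiv.trans
    (MeasurableEquiv.toLp 2 (Fin 2 → ℝ)).symm).trans MeasurableEquiv.finTwoArrow
  have hΦ : ∀ x, Φ x = (b.repr x 0, b.repr x 1) := fun x => rfl
  refine ⟨Φ, ?_, ?_, ?_⟩
  · exact (volume_preserving_finTwoArrow ℝ).comp
      ((PiLp.volume_preserving_ofLp (Fin 2)).comp b.measurePreserving_repr)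
  · intro x
    rw [hΦ]
    simp [b.repr_apply_apply, hb 0 rfl]
  · intro x y
    rw [hΦ, hΦ, ← b.repr.dist_map, EuclideanSpace.dist_eq, Real.sq_sqrt (by positivity)]
    simp [Real.dist_eq, sq_abs]

lemma vol_ball_toReal (x : E2) (r : ℝ) (hr : 0 < r) :
    (volume (ball x r)).toReal = r ^ 2 * Real.pi := by
  rw [EuclideanSpace.volume_ball_fin_two]
  simp [hr.le, Real.pi_pos.le]

lemma vol_inter_ne_top (S : Set E2) (x : E2) (r : ℝ) : volume (S ∩ ball x r) ≠ ⊤ :=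
  measure_ne_top_of_subset inter_subset_right measure_ball_lt_top.ne

lemma GG_of_density (Φ : E2 ≃ᵐ ℝ × ℝ) (hΦ : MeasurePreserving Φ volume volume)
    (hd : ∀ x y, dist x y ^ 2 = ((Φ x).1 - (Φ y).1) ^ 2 + ((Φ x).2 - (Φ y).2) ^ 2)
    (S : Set E2) (x : E2)
    (h : Tendsto (ballDensity S x) (nhdsWithin 0 (Ioi 0)) (nhds 0)) :
    ∃ k, Φ x ∈ GG (Φ.symm ⁻¹' Sᶜ) k := by
  have hpi := Real.pi_pos
  have h1 := h.eventually (gt_mem_nhds (show (0 : ℝ) < 1 / (32 * Real.pi) by positivity))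
  rw [eventually_nhdsWithin_iff, Metric.eventually_nhds_iff] at h1
  obtain ⟨δ, hδ, h1⟩ := h1
  obtain ⟨k, hk⟩ := exists_nat_one_div_lt (half_pos hδ)
  refine ⟨k, fun r hr hrk => ?_⟩
  have h2 := h1 (y := 2 * r) (by
    rw [Real.dist_eq, sub_zero, abs_of_pos (by linarith)]; linarith) (by
    show 0 < 2 * r
    linarith)
  rw [ballDensity, vol_ball_toReal x _ (by linarith), div_lt_iff₀ (by positivity)] at h2
  have h3 : 1 / (32 * Real.pi) * ((2 * r) ^ 2 * Real.pi) = r ^ 2 / 8 := by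
    field_simp; norm_num
  rw [h3] at h2
  have hsub : closedBall (Φ x) r \ (Φ.symm ⁻¹' Sᶜ) ⊆ Φ.symm ⁻¹' (S ∩ ball x (2 * r)) := by
    rintro z ⟨hz, hzS⟩
    obtain ⟨w, rfl⟩ := Φ.surjective z
    simp only [mem_preimage, MeasurableEquiv.symm_apply_apply, mem_compl_iff, not_not] at hzS ⊢
    refine ⟨hzS, ?_⟩
    rw [mem_closedBall, Prod.dist_eq, max_le_iff, Real.dist_eq, Real.dist_eq] at hz
    have e1 := sq_le_sq' (by linarith [abs_nonneg ((Φ w).1 - (Φ x).1)]) hz.1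
    have e2 := sq_le_sq' (by linarith [abs_nonneg ((Φ w).2 - (Φ x).2)]) hz.2
    rw [sq_abs] at e1 e2
    have e3 := hd w x
    rw [mem_ball]
    apply lt_of_pow_lt_pow_left₀ 2 (by linarith)
    nlinarith [sq_pos_of_pos hr]
  refine (measure_mono hsub).trans ?_
  rw [(hΦ.symm Φ).measure_preimage_equiv]
  exact (ENNReal.le_ofReal_iff_toReal_le (vol_inter_ne_top _ _ _) (by positivity)).2 h2.le

lemma ballDensity_compl (P : Set E2) (hP : MeasurableSet P) (x : E2)
    (h : Tendsto (ballDensity P x) (nhdsWithin 0 (Ioi 0)) (nhds 1)) :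
    Tendsto (ballDensity Pᶜ x) (nhdsWithin 0 (Ioi 0)) (nhds 0) := by
  have h1 : Tendsto (fun r => 1 - ballDensity P x r) (nhdsWithin 0 (Ioi 0)) (nhds (1 - 1)) :=
    tendsto_const_nhds.sub h
  rw [sub_self] at h1
  refine h1.congr' ?_
  filter_upwards [self_mem_nhdsWithin] with r hr
  have hr : (0 : ℝ) < r := hr
  have hb : 0 < (volume (ball x r)).toReal := by
    rw [vol_ball_toReal x r hr]; have := Real.pi_pos; positivity
  have h2 : (volume (ball x r)).toReal =
      (volume (P ∩ ball x r)).toReal + (volume (Pᶜ ∩ ball x r)).toReal := by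
    rw [← ENNReal.toReal_add (vol_inter_ne_top _ _ _) (vol_inter_ne_top _ _ _), inter_comm P,
      inter_comm Pᶜ, ← sdiff_eq, measure_inter_add_sdiff _ hP]
  unfold ballDensity
  rw [eq_div_iff hb.ne', sub_mul, div_mul_cancel₀ _ hb.ne']
  linarith

lemma ballDensity_congr {S S' U : Set E2} (hU : IsOpen U) (h : S ∩ U = S' ∩ U) {x : E2}
    (hx : x ∈ U) : ballDensity S x =ᶠ[nhdsWithin 0 (Ioi 0)] ballDensity S' x := by
  obtain ⟨ε, hε, hb⟩ := Metric.isOpen_iff.1 hU x hx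
  have h3 : ∀ᶠ r : ℝ in nhdsWithin 0 (Ioi 0), r < ε := nhdsWithin_le_nhds (gt_mem_nhds hε)
  filter_upwards [h3] with r hr
  have hbU : ball x r ⊆ U := (ball_subset_ball hr.le).trans hb
  have : S ∩ ball x r = S' ∩ ball x r := by
    rw [← inter_eq_self_of_subset_right hbU, ← inter_assoc, ← inter_assoc, h]
  unfold ballDensity
  rw [this]

lemma mem_essentialBoundary_congr {S S' U : Set E2} (hU : IsOpen U) (h : S ∩ U = S' ∩ U) {x : E2}
    (hx : x ∈ U) : x ∈ essentialBoundary S ↔ x ∈ essentialBoundary S' := by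
  have hc := ballDensity_congr hU h hx
  show (_ ∧ _) ↔ (_ ∧ _)
  rw [tendsto_congr' hc, tendsto_congr' hc]

lemma ballDensity_empty (x : E2) :
    Tendsto (ballDensity ∅ x) (nhdsWithin 0 (Ioi 0)) (nhds 0) := by
  have : ballDensity ∅ x = fun _ => 0 := by
    ext r; simp [ballDensity]
  rw [this]
  exact tendsto_const_nhds

lemma ballDensity_mono_zero {S P : Set E2} (h : S ⊆ P) (x : E2)
    (hP : Tendsto (ballDensity P x) (nhdsWithin 0 (Ioi 0)) (nhds 0)) :
    Tendsto (ballDensity S x) (nhdsWithin 0 (Ioi 0)) (nhds 0) := by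
  refine squeeze_zero (fun r => by unfold ballDensity; positivity) (fun r => ?_) hP
  unfold ballDensity
  gcongr
  exact vol_inter_ne_top _ _ _

/-- Cutting along a line consisting of density-zero points splits the perimeter. -/
lemma cut (P : Set E2) (hmeas : MeasurableSet P) (hind : Indecomposable P)
    (e : E2) (t : ℝ)
    (h0 : ∀ x : E2, inner ℝ e x = t → Tendsto (ballDensity P x) (nhdsWithin 0 (Ioi 0)) (nhds 0))
    (h1 : 0 < volume (P ∩ {x | inner ℝ e x < t}))
    (h2 : 0 < volume (P ∩ {x | t < inner ℝ e x})) : False := by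
  have hcont : Continuous fun x : E2 => (inner ℝ e x : ℝ) := by fun_prop
  have o1 : IsOpen {x : E2 | inner ℝ e x < t} := isOpen_lt hcont continuous_const
  have o2 : IsOpen {x : E2 | t < inner ℝ e x} := isOpen_lt continuous_const hcont
  set A := {x : E2 | inner ℝ e x < t} with hA
  set B := {x : E2 | t < inner ℝ e x} with hB
  have mA : ∀ x : E2, x ∈ A ↔ inner ℝ e x < t := fun x => Iff.rfl
  have mB : ∀ x : E2, x ∈ B ↔ t < inner ℝ e x := fun x => Iff.rfl
  have hAB : ∀ x, x ∈ A → x ∉ B := fun x h h' => lt_asymm ((mA x).1 h) ((mB x).1 h')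
  have hcase : ∀ x, x ∈ A ∨ x ∈ B ∨ inner ℝ e x = t := fun x => by
    rcases lt_trichotomy (inner ℝ e x : ℝ) t with h | h | h
    · exact Or.inl h
    · exact Or.inr (Or.inr h)
    · exact Or.inr (Or.inl h)
  have nb : ∀ S ⊆ P, ∀ x, inner ℝ e x = t → x ∉ essentialBoundary S := fun S hS x hx hxS =>
    hxS.1 (ballDensity_mono_zero hS x (h0 x hx))
  have ne : ∀ x, x ∉ essentialBoundary ∅ := fun x hx => hx.1 (ballDensity_empty x)
  have b1 : essentialBoundary (P ∩ A) = essentialBoundary P ∩ A := by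
    ext x
    rcases hcase x with h | h | h
    · rw [mem_essentialBoundary_congr (S' := P) o1 (by ext; simp) h]
      simp [h]
    · rw [mem_essentialBoundary_congr (S' := ∅) o2 (by
        ext z; have := hAB z; simp; tauto) h]
      simp only [ne, mem_inter_iff, false_iff, not_and]
      exact fun _ h' => hAB x h' h
    · simp only [nb _ inter_subset_left x h, nb P subset_rfl x h, mem_inter_iff, false_and]
  have b2 : essentialBoundary (P \ A) = essentialBoundary P \ A := by
    ext x
    rcases hcase x with h | h | h
    · rw [mem_essentialBoundary_congr (S' := ∅) o1 (by ext; simp) h]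
      simp [h, ne]
    · rw [mem_essentialBoundary_congr (S' := P) o2 (by
        ext z; have := hAB z; simp; tauto) h]
      have : x ∉ A := fun h' => hAB x h' h
      simp [this]
    · simp only [nb _ sdiff_subset x h, nb P subset_rfl x h, Set.mem_sdiff, false_and]
  refine hind ⟨P ∩ A, P \ A, hmeas.inter o1.measurableSet, hmeas.diff o1.measurableSet,
    (inter_union_sdiff P A).symm, ?_, h1, h2.trans_le (measure_mono ?_), ?_⟩
  · ext; simp; tauto
  · rintro x ⟨hx, hxB⟩
    exact ⟨hx, fun h => hAB x h hxB⟩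
  · rw [b1, b2, measure_inter_add_sdiff _ o1.measurableSet]

lemma ae_mem_proj (P : Set E2) (hmeas : MeasurableSet P) (hbdd : Bornology.IsBounded P)
    (hind : Indecomposable P) (e : E2) (he : ‖e‖ = 1) (α β : ℝ)
    (h1 : ∀ t, α < t → 0 < volume (P ∩ {x | inner ℝ e x < t}))
    (h2 : ∀ t, t < β → 0 < volume (P ∩ {x | t < inner ℝ e x})) :
    ∀ᵐ t : ℝ, t ∈ Ioo α β → t ∈ (fun x : E2 => (inner ℝ e x : ℝ)) '' essentialBoundary P := by
  obtain ⟨Φ, hΦ, hΦ1, hd⟩ := exists_coord e he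
  have hQ : MeasurableSet (Φ.symm ⁻¹' P) := Φ.symm.measurable hmeas
  obtain ⟨R, hR⟩ := hbdd.subset_ball (Φ.symm (0, 0))
  filter_upwards [line_lemma _ hQ] with t ht htI
  by_contra hcon
  have hnb : ∀ x : E2, inner ℝ e x = t → x ∉ essentialBoundary P := fun x hx hxP =>
    hcon ⟨x, hxP, hx⟩
  have hzero : ∀ x : E2, Tendsto (ballDensity P x) (nhdsWithin 0 (Ioi 0)) (nhds 0) →
      ∃ k, Φ x ∈ GG (Φ.symm ⁻¹' P)ᶜ k := fun x hx => GG_of_density Φ hΦ hd P x hx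
  have hone : ∀ x : E2, Tendsto (ballDensity P x) (nhdsWithin 0 (Ioi 0)) (nhds 1) →
      ∃ k, Φ x ∈ GG (Φ.symm ⁻¹' P) k := fun x hx => by
    have := GG_of_density Φ hΦ hd Pᶜ x (ballDensity_compl P hmeas x hx)
    rwa [compl_compl] at this
  have hdich : ∀ x : E2, inner ℝ e x = t →
      Tendsto (ballDensity P x) (nhdsWithin 0 (Ioi 0)) (nhds 0) ∨
      Tendsto (ballDensity P x) (nhdsWithin 0 (Ioi 0)) (nhds 1) := fun x hx => by
    by_contra h
    rw [not_or] at h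
    exact hnb x hx h
  have hin : ∀ s, inner ℝ e (Φ.symm (t, s)) = t := fun s => by
    rw [← hΦ1]; simp
  have hall := ht (fun s => by
    rcases hdich _ (hin s) with h | h
    · right; simpa using hzero _ h
    · left; simpa using hone _ h) (by
    refine ⟨|R| + 1, ?_⟩
    have hx := hzero (Φ.symm (t, |R| + 1)) (by
      have hfar : Φ.symm (t, |R| + 1) ∈ (closedBall (Φ.symm (0, 0)) R)ᶜ := by
        intro hm
        have h3 := hd (Φ.symm (t, |R| + 1)) (Φ.symm (0, 0))
        simp only [MeasurableEquiv.apply_symm_apply, sub_zero] at h3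
        rw [mem_closedBall] at hm
        have h4 : dist (Φ.symm (t, |R| + 1)) (Φ.symm (0, 0)) ≤ |R| := hm.trans (le_abs_self R)
        have h5 := dist_nonneg (x := Φ.symm (t, |R| + 1)) (y := Φ.symm (0, 0))
        nlinarith [abs_nonneg R, sq_nonneg t]
      rw [tendsto_congr' (ballDensity_congr (S' := ∅) isClosed_closedBall.isOpen_compl (by
        ext z
        have := @hR z
        have h6 := @ball_subset_closedBall _ _ (Φ.symm (0, 0)) R z
        simp only [mem_inter_iff, mem_compl_iff, mem_empty_iff_false]
        tauto) hfar)]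
      exact ballDensity_empty _)
    simpa using hx)
  refine cut P hmeas hind e t (fun x hx => ?_) (h1 t htI.1) (h2 t htI.2)
  refine (hdich x hx).resolve_right (fun h => ?_)
  obtain ⟨k, hk⟩ := hone x h
  refine hall (Φ x).2 k ?_
  have : (t, (Φ x).2) = Φ x := by rw [← hx, ← hΦ1]
  rwa [this]

lemma pair_bound (P : Set E2)
    (hmeas : MeasurableSet P) (hbdd : Bornology.IsBounded P) (hind : Indecomposable P)
    (x y : E2) (hx : ∀ r, 0 < r → 0 < volume (P ∩ ball x r))
    (hy : ∀ r, 0 < r → 0 < volume (P ∩ ball y r)) :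
    ENNReal.ofReal (dist x y) ≤ μH[1] (essentialBoundary P) := by
  rcases eq_or_ne x y with rfl | hne
  · simp
  have hD : 0 < ‖y - x‖ := norm_pos_iff.2 (sub_ne_zero.2 hne.symm)
  set e : E2 := (‖y - x‖)⁻¹ • (y - x) with he_def
  have he : ‖e‖ = 1 := by
    rw [he_def, norm_smul, norm_inv, norm_norm, inv_mul_cancel₀ hD.ne']
  have hexy : (inner ℝ e y : ℝ) - inner ℝ e x = dist x y := by
    rw [← inner_sub_right, he_def, real_inner_smul_left, real_inner_self_eq_norm_sq, dist_comm,
      dist_eq_norm]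
    field_simp
  have hip : ∀ u v : E2, |(inner ℝ e u : ℝ) - inner ℝ e v| ≤ dist u v := fun u v => by
    rw [← inner_sub_right, dist_eq_norm]
    simpa [he] using abs_real_inner_le_norm e (u - v)
  have hae := ae_mem_proj P hmeas hbdd hind e he (inner ℝ e x) (inner ℝ e y)
    (fun t ht => (hx _ (sub_pos.2 ht)).trans_le (measure_mono (by
      rintro z ⟨hz, hzb⟩
      refine ⟨hz, ?_⟩
      have := (abs_le.1 (hip z x)).2
      rw [mem_ball] at hzb
      show inner ℝ e z < t
      linarith)))
    (fun t ht => (hy _ (sub_pos.2 ht)).trans_le (measure_mono (by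
      rintro z ⟨hz, hzb⟩
      refine ⟨hz, ?_⟩
      have := (abs_le.1 (hip z y)).1
      rw [mem_ball] at hzb
      show t < inner ℝ e z
      linarith)))
  have hlip : LipschitzWith 1 (fun x : E2 => (inner ℝ e x : ℝ)) :=
    LipschitzWith.of_dist_le_mul (fun u v => by simpa [Real.dist_eq] using hip u v)
  calc ENNReal.ofReal (dist x y)
      = volume (Ioo (inner ℝ e x : ℝ) (inner ℝ e y)) := by rw [Real.volume_Ioo, hexy]
    _ ≤ volume ((fun x : E2 => (inner ℝ e x : ℝ)) '' essentialBoundary P) :=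
        measure_mono_ae hae
    _ = μH[1] ((fun x : E2 => (inner ℝ e x : ℝ)) '' essentialBoundary P) := by
        rw [hausdorffMeasure_real]
    _ ≤ μH[1] (essentialBoundary P) := by
        simpa using hlip.hausdorffMeasure_image_le zero_le_one (essentialBoundary P)

/-- A bounded indecomposable set of finite perimeter in the plane has essential diameter
bounded by the `H¹`-measure of its essential boundary. -/
theorem essDiam_le_perimeter (P : Set E2)
    (hmeas : MeasurableSet P) (hbdd : Bornology.IsBounded P)
    (hfin : μH[1] (essentialBoundary P) < ⊤)
    (hind : Indecomposable P) :
    ENNReal.ofReal (essDiam P) ≤ μH[1] (essentialBoundary P) := by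
  set N : Set E2 := {x | x ∈ P ∧ ∃ r, 0 < r ∧ volume (P ∩ ball x r) = 0} with hN
  have hN0 : volume N = 0 := by
    refine measure_null_of_locally_null N ?_
    rintro x ⟨hx, r, hr, h0⟩
    refine ⟨P ∩ ball x r, ?_, h0⟩
    filter_upwards [self_mem_nhdsWithin, mem_nhdsWithin_of_mem_nhds (ball_mem_nhds x hr)]
      with z hz hz2
    exact ⟨hz.1, hz2⟩
  have hpos : ∀ x ∈ P \ N, ∀ r, 0 < r → 0 < volume (P ∩ ball x r) := by
    rintro x ⟨hx, hxN⟩ r hr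
    rw [pos_iff_ne_zero]
    exact fun h => hxN ⟨hx, r, hr, h⟩
  refine ENNReal.ofReal_le_of_le_toReal ?_
  refine csInf_le ⟨0, fun d hd => hd.1⟩ ⟨ENNReal.toReal_nonneg, N, hN0, fun x hx y hy => ?_⟩
  have := pair_bound P hmeas hbdd hind x y (hpos x hx) (hpos y hy)
  exact (ENNReal.ofReal_le_iff_le_toReal hfin.ne).1 this
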